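/- Let μ be a σ-finite measure on a measurable space Y, let {f(·;θ) : θ ∈ Θ} be a complete family of probability density functions on Y with respect to μ, and let z ⊆ Y be a measurable set. Then for every measurable t : Y → ℝ such that the function y ↦ t(y)·1_z(y)·f(y;θ) is μ-integrable for every θ and ∫_z t(y) f(y;θ) dμ(y) = 0 for all θ ∈ Θ, one has t(y)·f(y;θ) = 0 for μ-almost every y ∈ z, for every θ ∈ Θ. -/

import Mathlib

open MeasureTheory

/-- Completeness, in the statistical sense, of a family of functions `f θ` with respect to `μ`.
The members are arbitrary scalar functions rather than probability densities, so that the notion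
can be applied after restricting `μ` without renormalizing. -/
def IsCompleteFamily {𝕜 Y Θ : Type*} [RCLike 𝕜] [MeasurableSpace Y] (μ : Measure Y)
    (f : Θ → Y → 𝕜) : Prop :=
  ∀ t : Y → 𝕜, Measurable t →
    (∀ θ, Integrable (fun y => t y * f θ y) μ) →
    (∀ θ, ∫ y, t y * f θ y ∂μ = 0) →
    ∀ θ, ∀ᵐ y ∂μ, t y * f θ y = 0

section Restrict

variable {𝕜 Y Θ : Type*} [RCLike 𝕜] [MeasurableSpace Y] {μ : Measure Y} {f : Θ → Y → 𝕜} {z : Set Y}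

theorem integrable_mul_indicator_one_mul_iff {R : Type*} [NormedRing R] (hz : MeasurableSet z)
    (t g : Y → R) :
    Integrable (fun y => t y * z.indicator (fun _ => (1 : R)) y * g y) μ ↔
      IntegrableOn (fun y => t y * g y) z μ := by
  rw [← integrable_indicator_iff hz]
  simp only [← Set.indicator_mul_right, mul_one, ← Set.indicator_mul_left]

theorem IsCompleteFamily.restrict (hf : IsCompleteFamily μ f) (hz : MeasurableSet z) :
    IsCompleteFamily (μ.restrict z) f := by
  intro t ht ht_int ht_zero θ
  have mul_eq (θ : Θ) :
      (fun y => z.indicator t y * f θ y) = z.indicator (fun y => t y * f θ y) :=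
    funext fun y => (Set.indicator_mul_left z t (f θ)).symm
  have ae_zero : ∀ᵐ y ∂μ, z.indicator t y * f θ y = 0 := by
    refine hf (z.indicator t) (ht.indicator hz) (fun θ => ?_) (fun θ => ?_) θ
    · rw [mul_eq, integrable_indicator_iff hz]
      exact ht_int θ
    · rw [mul_eq, integral_indicator hz]
      exact ht_zero θ
  rw [ae_restrict_iff' hz]
  filter_upwards [ae_zero] with y hy hyz
  rwa [Set.indicator_of_mem hyz] at hy

theorem restrict_complete_general (hf : IsCompleteFamily μ f) (hz : NullMeasurableSet z μ) :
    IsCompleteFamily (μ.restrict z) f := by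
  rw [← Measure.restrict_congr_set hz.toMeasurable_ae_eq]
  exact hf.restrict (measurableSet_toMeasurable μ z)

end Restrict

/-- Extension of Lemma 3.1 used in the proof of Theorem 4.1 (Lu–Copas): if a family of
densities is complete, then the family of conditional distributions given the event
`y ∈ z` is also complete. -/
theorem restrict_complete
    {Y : Type*} [MeasurableSpace Y] (μ : Measure Y) [SigmaFinite μ]
    {Θ : Type*} (f : Θ → Y → ℝ)
    (hf_meas : ∀ θ, Measurable (f θ))
    (hf_nonneg : ∀ θ y, 0 ≤ f θ y)
    (hf_int : ∀ θ, ∫ y, f θ y ∂μ = 1)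
    -- completeness of the family {f(·;θ) : θ ∈ Θ}
    (hf_complete : ∀ t : Y → ℝ, Measurable t →
      (∀ θ, Integrable (fun y => t y * f θ y) μ) →
      (∀ θ, ∫ y, t y * f θ y ∂μ = 0) →
      ∀ θ, ∀ᵐ y ∂μ, t y * f θ y = 0)
    (z : Set Y) (hz : MeasurableSet z) :
    ∀ t : Y → ℝ, Measurable t →
      (∀ θ, Integrable (fun y => t y * Set.indicator z (fun _ => (1 : ℝ)) y * f θ y) μ) →
      (∀ θ, ∫ y in z, t y * f θ y ∂μ = 0) →
      ∀ θ, ∀ᵐ y ∂μ, y ∈ z → t y * f θ y = 0 :=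
  fun t ht ht_int ht_zero θ => (ae_restrict_iff' hz).1 <|
    restrict_complete_general hf_complete hz.nullMeasurableSet t ht
      (fun θ => (integrable_mul_indicator_one_mul_iff hz t (f θ)).1 (ht_int θ)) ht_zero θ
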